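/- Let C be a cartesian category, p : E → B an arrow, and (P, leg, wk, proj, subst) a polynomial functor for p. Define, for each object (f : Y → B) of C/B, the arrow η_Y : Y → P(Y ×_B E) uniquely determined (via the isomorphism P(Y ×_B E) ≅ PY ×_{PB} PE, since P preserves pullbacks) by the equations P(π₁) ∘ η_Y = wk_Y ∘ (id_Y, f) and P(π₂) ∘ η_Y = proj ∘ f. Then η is natural in Y and satisfies the two triangle identities: P(subst_X) ∘ η_{PX} = id_{PX} for all X ∈ C, and subst_{Y ×_B E} ∘ (η_Y ×_B E) = id_{Y ×_B E} for all Y ∈ C/B. Consequently (P, leg) : C → C/B is right adjoint to (− ×_B E) : C/B → C with unit η and counit subst. -/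

import Mathlib

open CategoryTheory CategoryTheory.Limits

universe v u

variable {C : Type u} [Category.{v} C]

/-- A *polynomial functor for `p`*: a pullback-preserving endofunctor `P : C ⥤ C` equipped
with a natural transformation `leg_X : P X ⟶ B`, a natural transformation
`wk_X : X × B ⟶ P X` over `B`, an arrow `proj : B ⟶ P E` over `B`, and a natural
transformation `subst_X : P X ×_B E ⟶ X`, satisfying axioms (P1)–(P4).  Morphisms between
pullbacks (such as `proj ×_B E`, `wk_X ×_B E`, the functorial action of `P(−) ×_B E` on a
morphism, and the pairing used in (P4)) are characterized by their compositions with the two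
pullback projections. -/
structure IsPolynomialFor [HasFiniteLimits C] {E B : C} (p : E ⟶ B)
    (P : C ⥤ C) (leg : ∀ X : C, P.obj X ⟶ B) (wk : ∀ X : C, X ⨯ B ⟶ P.obj X)
    (proj : B ⟶ P.obj E) (subst : ∀ X : C, pullback (leg X) p ⟶ X) : Prop where
  /-- `P` preserves pullbacks. -/
  preserves : PreservesLimitsOfShape WalkingCospan P
  /-- `leg` is a natural transformation `P ⟹ B`. -/
  leg_natural : ∀ (X Y : C) (f : X ⟶ Y), P.map f ≫ leg Y = leg X
  /-- `wk` is a natural transformation `(− × B) ⟹ P`. -/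
  wk_natural : ∀ (X Y : C) (f : X ⟶ Y), prod.map f (𝟙 B) ≫ wk Y = wk X ≫ P.map f
  /-- `wk_X : X × B ⟶ P X` is a morphism over `B`. -/
  wk_over : ∀ X : C, wk X ≫ leg X = (prod.snd : X ⨯ B ⟶ B)
  /-- `proj : B ⟶ P E` is a morphism over `B`. -/
  proj_over : proj ≫ leg E = 𝟙 B
  /-- `subst` is a natural transformation `(P(−) ×_B E) ⟹ 𝟭 C`: for `f : X ⟶ Y`, composing
  the induced morphism `P X ×_B E ⟶ P Y ×_B E` (characterized by the two displayed equations)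
  with `subst Y` equals `subst X ≫ f`. -/
  subst_natural : ∀ (X Y : C) (f : X ⟶ Y) (u : pullback (leg X) p ⟶ pullback (leg Y) p),
    u ≫ pullback.fst (leg Y) p = pullback.fst (leg X) p ≫ P.map f →
    u ≫ pullback.snd (leg Y) p = pullback.snd (leg X) p →
    u ≫ subst Y = subst X ≫ f
  /-- (P1): `P p ∘ proj = wk_B ∘ Δ_B`. -/
  P1 : proj ≫ P.map p = prod.lift (𝟙 B) (𝟙 B) ≫ wk B
  /-- (P2): `subst_E ∘ (proj ×_B E)` is the canonical isomorphism `B ×_B E ≅ E` (the second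
  pullback projection), where `proj ×_B E : B ×_B E ⟶ P E ×_B E` is characterized by the two
  displayed equations. -/
  P2 : ∀ u : pullback (𝟙 B) p ⟶ pullback (leg E) p,
    u ≫ pullback.fst (leg E) p = pullback.fst (𝟙 B) p ≫ proj →
    u ≫ pullback.snd (leg E) p = pullback.snd (𝟙 B) p →
    u ≫ subst E = pullback.snd (𝟙 B) p
  /-- (P3): `subst_X ∘ (wk_X ×_B E)` is the projection `(X × B) ×_B E ≅ X × E ⟶ X`, where
  `wk_X ×_B E : (X × B) ×_B E ⟶ P X ×_B E` is characterized by the displayed equations. -/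
  P3 : ∀ (X : C) (u : pullback (prod.snd : X ⨯ B ⟶ B) p ⟶ pullback (leg X) p),
    u ≫ pullback.fst (leg X) p = pullback.fst (prod.snd : X ⨯ B ⟶ B) p ≫ wk X →
    u ≫ pullback.snd (leg X) p = pullback.snd (prod.snd : X ⨯ B ⟶ B) p →
    u ≫ subst X = pullback.fst (prod.snd : X ⨯ B ⟶ B) p ≫ (prod.fst : X ⨯ B ⟶ X)
  /-- (P4): `P(subst_X) ∘ (wk_{PX} ∘ (id_{PX}, leg_X), proj ∘ leg_X) = id_{PX}`, where the
  pairing `P X ⟶ P (P X ×_B E)` is characterized, via the isomorphism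
  `P (P X ×_B E) ≅ P P X ×_{P B} P E` coming from `P` preserving pullbacks, by its composites
  with `P` applied to the two pullback projections. -/
  P4 : ∀ (X : C) (u : P.obj X ⟶ P.obj (pullback (leg X) p)),
    u ≫ P.map (pullback.fst (leg X) p) = prod.lift (𝟙 (P.obj X)) (leg X) ≫ wk (P.obj X) →
    u ≫ P.map (pullback.snd (leg X) p) = leg X ≫ proj →
    u ≫ P.map (subst X) = 𝟙 (P.obj X)



/-- The functor `(P, leg) : C ⥤ C/B` determined by an endofunctor `P : C ⥤ C` and a natural
transformation `leg_X : P X ⟶ B`. -/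
@[simps]
def legFunctor {B : C} (P : C ⥤ C) (leg : ∀ X : C, P.obj X ⟶ B)
    (hleg : ∀ (X Y : C) (f : X ⟶ Y), P.map f ≫ leg Y = leg X) : C ⥤ Over B where
  obj X := Over.mk (leg X)
  map {X Y} f := Over.homMk (P.map f) (hleg X Y f)

/-- The property that a family `η_Y : Y ⟶ P (Y ×_B E)` (for `Y ∈ C/B`) is a natural
transformation making `(P, leg) : C ⥤ C/B` a right adjoint of `(− ×_B E) : C/B ⥤ C` with
unit `η` and counit `subst`: each `η_Y` is a morphism over `B`, `η` is natural in `Y`, and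
the two triangle identities hold.  In the second triangle identity, the morphism
`η_Y ×_B E : Y ×_B E ⟶ P (Y ×_B E) ×_B E` is characterized by its compositions with the two
pullback projections. -/
structure IsAdjointUnit [HasFiniteLimits C] {E B : C} (p : E ⟶ B)
    (P : C ⥤ C) (leg : ∀ X : C, P.obj X ⟶ B) (subst : ∀ X : C, pullback (leg X) p ⟶ X)
    (η : ∀ Y : Over B, Y.left ⟶ P.obj (pullback Y.hom p)) : Prop where
  /-- Each `η_Y` is a morphism `Y ⟶ (P (Y ×_B E), leg)` in `C/B`. -/
  over' : ∀ Y : Over B, η Y ≫ leg (pullback Y.hom p) = Y.hom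
  /-- `η` is natural in `Y ∈ C/B`. -/
  natural : ∀ (Y Z : Over B) (f : Y ⟶ Z),
    f.left ≫ η Z = η Y ≫ P.map ((Over.pullback p ⋙ Over.forget E).map f)
  /-- First triangle identity: `P (subst_X) ∘ η_{(P X, leg_X)} = id_{P X}`. -/
  triangle₁ : ∀ X : C, η (Over.mk (leg X)) ≫ P.map (subst X) = 𝟙 (P.obj X)
  /-- Second triangle identity: `subst_{Y ×_B E} ∘ (η_Y ×_B E) = id_{Y ×_B E}`. -/
  triangle₂ : ∀ (Y : Over B)
    (u : pullback Y.hom p ⟶ pullback (leg (pullback Y.hom p)) p),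
    u ≫ pullback.fst (leg (pullback Y.hom p)) p = pullback.fst Y.hom p ≫ η Y →
    u ≫ pullback.snd (leg (pullback Y.hom p)) p = pullback.snd Y.hom p →
    u ≫ subst (pullback Y.hom p) = 𝟙 (pullback Y.hom p)

/-!
An arrow `u : W ⟶ P X ×_B E` is a generalized element of `P X` together with a point of `E` over
the same point of `B`, and `subst` evaluates the former at the latter. In these terms (P3) and (P2)
compute the substitution into a weakened element and into the generic element `proj`. Since
arrows into `Y ×_B E` are determined by their two projections, the second triangle identity splits
by naturality of `subst` into these two computations, because `P(π₁) ∘ η` is a weakening and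
`P(π₂) ∘ η` is an instance of `proj`. The first triangle identity is (P4). Naturality of `η` can be
checked after `P(π₁)` and `P(π₂)`, which are jointly monic because `P` preserves pullbacks.
-/

namespace IsPolynomialFor

variable [HasFiniteLimits C] {E B : C} {p : E ⟶ B} {P : C ⥤ C} {leg : ∀ X : C, P.obj X ⟶ B}
  {wk : ∀ X : C, X ⨯ B ⟶ P.obj X} {proj : B ⟶ P.obj E} {subst : ∀ X : C, pullback (leg X) p ⟶ X}

lemma comp_lift_wk (h : IsPolynomialFor p P leg wk proj subst) {Y Z : C} {f : Y ⟶ B}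
    {f' : Z ⟶ B} (g : Y ⟶ Z) (hg : g ≫ f' = f) :
    g ≫ prod.lift (𝟙 Z) f' ≫ wk Z = prod.lift (𝟙 Y) f ≫ wk Y ≫ P.map g := by
  rw [← h.wk_natural, prod.lift_map_assoc, prod.comp_lift_assoc, hg, Category.id_comp,
    Category.comp_id, Category.comp_id]

lemma subst_comp (h : IsPolynomialFor p P leg wk proj subst) {X Y : C} (f : X ⟶ Y) :
    subst X ≫ f =
      pullback.lift (pullback.fst (leg X) p ≫ P.map f) (pullback.snd (leg X) p)
        (by rw [Category.assoc, h.leg_natural, pullback.condition]) ≫ subst Y :=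
  (h.subst_natural X Y f _ (pullback.lift_fst _ _ _) (pullback.lift_snd _ _ _)).symm

lemma comp_subst_of_comp_fst_eq_wk (h : IsPolynomialFor p P leg wk proj subst) {W X : C}
    {u : W ⟶ pullback (leg X) p} {x : W ⟶ X ⨯ B}
    (hu : u ≫ pullback.fst (leg X) p = x ≫ wk X) : u ≫ subst X = x ≫ prod.fst := by
  obtain ⟨wkE, wkE_fst, wkE_snd⟩ :=
    pullback.lift' (f := leg X) (g := p) (pullback.fst prod.snd p ≫ wk X) (pullback.snd prod.snd p)
      (by rw [Category.assoc, h.wk_over, pullback.condition])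
  obtain ⟨v, v_fst, v_snd⟩ :=
    pullback.lift' (f := prod.snd) (g := p) x (u ≫ pullback.snd (leg X) p)
      (by rw [Category.assoc, ← pullback.condition, reassoc_of% hu, h.wk_over])
  have factor : u = v ≫ wkE := by
    ext <;> simp only [Category.assoc, wkE_fst, wkE_snd, reassoc_of% v_fst, v_snd, hu]
  rw [factor, Category.assoc, h.P3 X wkE wkE_fst wkE_snd, reassoc_of% v_fst]

lemma comp_subst_of_comp_fst_eq_proj (h : IsPolynomialFor p P leg wk proj subst) {W : C}
    {u : W ⟶ pullback (leg E) p} {b : W ⟶ B}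
    (hu : u ≫ pullback.fst (leg E) p = b ≫ proj) :
    u ≫ subst E = u ≫ pullback.snd (leg E) p := by
  obtain ⟨projE, projE_fst, projE_snd⟩ :=
    pullback.lift' (f := leg E) (g := p) (pullback.fst (𝟙 B) p ≫ proj) (pullback.snd (𝟙 B) p)
      (by rw [Category.assoc, h.proj_over, pullback.condition])
  obtain ⟨v, v_fst, v_snd⟩ :=
    pullback.lift' (f := 𝟙 B) (g := p) b (u ≫ pullback.snd (leg E) p)
      (by rw [Category.assoc, ← pullback.condition, reassoc_of% hu, h.proj_over])
  have factor : u = v ≫ projE := by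
    ext <;> simp only [Category.assoc, projE_fst, projE_snd, reassoc_of% v_fst, v_snd, hu]
  rw [factor, Category.assoc, Category.assoc, h.P2 projE projE_fst projE_snd, projE_snd]

lemma unit_comp_leg (h : IsPolynomialFor p P leg wk proj subst) {Y : C} {f : Y ⟶ B}
    {η : Y ⟶ P.obj (pullback f p)}
    (hη : η ≫ P.map (pullback.fst f p) = prod.lift (𝟙 Y) f ≫ wk Y) :
    η ≫ leg (pullback f p) = f := by
  rw [← h.leg_natural _ _ (pullback.fst f p), reassoc_of% hη, h.wk_over, prod.lift_snd]

lemma unit_natural (h : IsPolynomialFor p P leg wk proj subst) {Y Z : C} {f : Y ⟶ B}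
    {f' : Z ⟶ B} {η : Y ⟶ P.obj (pullback f p)} {η' : Z ⟶ P.obj (pullback f' p)}
    (hη₁ : η ≫ P.map (pullback.fst f p) = prod.lift (𝟙 Y) f ≫ wk Y)
    (hη₂ : η ≫ P.map (pullback.snd f p) = f ≫ proj)
    (hη'₁ : η' ≫ P.map (pullback.fst f' p) = prod.lift (𝟙 Z) f' ≫ wk Z)
    (hη'₂ : η' ≫ P.map (pullback.snd f' p) = f' ≫ proj)
    {g : Y ⟶ Z} (hg : g ≫ f' = f) {u : pullback f p ⟶ pullback f' p}
    (hu₁ : u ≫ pullback.fst f' p = pullback.fst f p ≫ g)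
    (hu₂ : u ≫ pullback.snd f' p = pullback.snd f p) :
    g ≫ η' = η ≫ P.map u := by
  have := h.preserves
  refine ((IsPullback.of_hasPullback f' p).map P).hom_ext ?_ ?_
  · calc (g ≫ η') ≫ P.map (pullback.fst f' p)
        = g ≫ prod.lift (𝟙 Z) f' ≫ wk Z := by rw [Category.assoc, hη'₁]
      _ = prod.lift (𝟙 Y) f ≫ wk Y ≫ P.map g := h.comp_lift_wk g hg
      _ = η ≫ P.map (pullback.fst f p) ≫ P.map g := by rw [reassoc_of% hη₁]
      _ = (η ≫ P.map u) ≫ P.map (pullback.fst f' p) := by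
        rw [← P.map_comp, ← hu₁, P.map_comp, Category.assoc]
  · calc (g ≫ η') ≫ P.map (pullback.snd f' p)
        = f ≫ proj := by rw [Category.assoc, hη'₂, reassoc_of% hg]
      _ = (η ≫ P.map u) ≫ P.map (pullback.snd f' p) := by
        rw [Category.assoc, ← P.map_comp, hu₂, hη₂]

lemma comp_subst_eq_id (h : IsPolynomialFor p P leg wk proj subst) {Y : C} {f : Y ⟶ B}
    {η : Y ⟶ P.obj (pullback f p)}
    (hη₁ : η ≫ P.map (pullback.fst f p) = prod.lift (𝟙 Y) f ≫ wk Y)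
    (hη₂ : η ≫ P.map (pullback.snd f p) = f ≫ proj)
    {u : pullback f p ⟶ pullback (leg (pullback f p)) p}
    (hu₁ : u ≫ pullback.fst (leg (pullback f p)) p = pullback.fst f p ≫ η)
    (hu₂ : u ≫ pullback.snd (leg (pullback f p)) p = pullback.snd f p) :
    u ≫ subst (pullback f p) = 𝟙 (pullback f p) := by
  ext
  · rw [Category.assoc, h.subst_comp, ← Category.assoc,
      h.comp_subst_of_comp_fst_eq_wk (x := pullback.fst f p ≫ prod.lift (𝟙 Y) f)
        (by simp only [Category.assoc, pullback.lift_fst, reassoc_of% hu₁, hη₁])]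
    simp only [Category.assoc, prod.lift_fst, Category.comp_id, Category.id_comp]
  · rw [Category.assoc, h.subst_comp, ← Category.assoc,
      h.comp_subst_of_comp_fst_eq_proj (b := pullback.fst f p ≫ f)
        (by simp only [Category.assoc, pullback.lift_fst, reassoc_of% hu₁, hη₂])]
    simp only [Category.assoc, pullback.lift_snd, hu₂, Category.id_comp]

end IsPolynomialFor

/-- The adjunction `(− ×_B E) ⊣ (P, leg)` with unit `η` and counit `subst`. Naturality of `subst`
is stated, as in `IsPolynomialFor`, for any arrow `u` with the projections of `P f ×_B E`. -/
noncomputable def IsAdjointUnit.adjunction [HasFiniteLimits C] {E B : C} {p : E ⟶ B} {P : C ⥤ C}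
    {leg : ∀ X : C, P.obj X ⟶ B} {subst : ∀ X : C, pullback (leg X) p ⟶ X}
    {η : ∀ Y : Over B, Y.left ⟶ P.obj (pullback Y.hom p)}
    (hη : IsAdjointUnit p P leg subst η)
    (leg_natural : ∀ (X Y : C) (f : X ⟶ Y), P.map f ≫ leg Y = leg X)
    (subst_natural : ∀ (X Y : C) (f : X ⟶ Y) (u : pullback (leg X) p ⟶ pullback (leg Y) p),
      u ≫ pullback.fst (leg Y) p = pullback.fst (leg X) p ≫ P.map f →
      u ≫ pullback.snd (leg Y) p = pullback.snd (leg X) p →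
      u ≫ subst Y = subst X ≫ f) :
    Over.pullback p ⋙ Over.forget E ⊣ legFunctor P leg leg_natural where
  unit :=
    { app Y := Over.homMk (η Y) (hη.over' Y)
      naturality Y Z f := Over.OverMorphism.ext (hη.natural Y Z f) }
  counit :=
    { app := subst
      naturality X Y f :=
        subst_natural X Y f _ (pullback.lift_fst _ _ _) (pullback.lift_snd _ _ _) }
  left_triangle_components Y :=
    hη.triangle₂ Y _ (pullback.lift_fst _ _ _) (pullback.lift_snd _ _ _)
  right_triangle_components X := Over.OverMorphism.ext (hη.triangle₁ X)

/-- Let `C` be a cartesian category, `p : E ⟶ B` an arrow, and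
`(P, leg, wk, proj, subst)` a polynomial functor for `p`.  For each `Y ∈ C/B` let
`η_Y : Y ⟶ P (Y ×_B E)` be the arrow uniquely determined (via the isomorphism
`P (Y ×_B E) ≅ P Y ×_{P B} P E`, since `P` preserves pullbacks) by the equations
`P(π₁) ∘ η_Y = wk_Y ∘ (id_Y, f)` and `P(π₂) ∘ η_Y = proj ∘ f`.  Then `η` is natural in `Y`
and satisfies the two triangle identities (together with being over `B`, this is the statement
`IsAdjointUnit p P leg subst η`); consequently `(P, leg) : C ⥤ C/B` is right adjoint to
`(− ×_B E) : C/B ⥤ C` with unit `η` and counit `subst`. -/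
theorem isAdjointUnit_of_isPolynomialFor
    {C : Type u} [Category.{v} C] [HasFiniteLimits C] {E B : C} (p : E ⟶ B)
    (P : C ⥤ C) (leg : ∀ X : C, P.obj X ⟶ B) (wk : ∀ X : C, X ⨯ B ⟶ P.obj X)
    (proj : B ⟶ P.obj E) (subst : ∀ X : C, pullback (leg X) p ⟶ X)
    (h : IsPolynomialFor p P leg wk proj subst)
    (η : ∀ Y : Over B, Y.left ⟶ P.obj (pullback Y.hom p))
    (hη₁ : ∀ Y : Over B,
      η Y ≫ P.map (pullback.fst Y.hom p) = prod.lift (𝟙 Y.left) Y.hom ≫ wk Y.left)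
    (hη₂ : ∀ Y : Over B, η Y ≫ P.map (pullback.snd Y.hom p) = Y.hom ≫ proj) :
    IsAdjointUnit p P leg subst η ∧
      ∃ adjn : (Over.pullback p ⋙ Over.forget E) ⊣ legFunctor P leg h.leg_natural,
        (∀ Y : Over B, (adjn.unit.app Y).left = η Y) ∧
        (∀ X : C, adjn.counit.app X = subst X) := by
  have isAdjointUnit : IsAdjointUnit p P leg subst η :=
    { over' Y := h.unit_comp_leg (hη₁ Y)
      natural Y Z f := h.unit_natural (hη₁ Y) (hη₂ Y) (hη₁ Z) (hη₂ Z) (Over.w f)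
        (pullback.lift_fst _ _ _) (pullback.lift_snd _ _ _)
      triangle₁ X := h.P4 X _ (hη₁ (Over.mk (leg X))) (hη₂ (Over.mk (leg X)))
      triangle₂ Y _ hu₁ hu₂ := h.comp_subst_eq_id (hη₁ Y) (hη₂ Y) hu₁ hu₂ }
  exact ⟨isAdjointUnit, isAdjointUnit.adjunction h.leg_natural h.subst_natural,
    fun _ => rfl, fun _ => rfl⟩
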